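/- arXiv:1003.0887 — 2 statements merged into one kernel-verified Lean document; each statement's English description precedes it below -/
import Mathlib

section
/- Let X be a locally compact Hausdorff space and let k be a bounded symmetric positive definite kernel on X with k(·,x) ∈ C_0(X) for all x ∈ X, with RKHS H. Then k is c0-universal if and only if the embedding μ ↦ ∫_X k(·,x) dμ(x) from M_b(X) into H is injective, i.e., ∫_X k(·,x) dμ(x) = 0 implies μ = 0 for every μ ∈ M_b(X). -/
open MeasureTheory Filter Topology RealInnerProductSpace
open scoped ZeroAtInfty

/-- Integral of a vector-valued function with respect to a finite signed measure,
defined via the Jordan decomposition. -/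
noncomputable def svInt {X : Type*} [MeasurableSpace X] {E : Type*}
    [NormedAddCommGroup E] [NormedSpace ℝ E]
    (μ : MeasureTheory.SignedMeasure X) (f : X → E) : E :=
  (∫ x, f x ∂μ.toJordanDecomposition.posPart) - ∫ x, f x ∂μ.toJordanDecomposition.negPart

open scoped NNReal ENNReal CompactlySupported

/-- A measure dominated by a finite inner regular measure is inner regular. -/
theorem MeasureTheory.Measure.InnerRegular.of_le {X : Type*} [TopologicalSpace X] [T2Space X]
    [MeasurableSpace X] [OpensMeasurableSpace X] {μ ν : Measure X} [IsFiniteMeasure ν]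
    [ν.InnerRegular] (h : μ ≤ ν) : μ.InnerRegular := by
  refine ⟨fun A hA r hr => ?_⟩
  obtain ⟨K, hKA, hK, hlt⟩ := hA.exists_isCompact_lt_add (μ := ν) (measure_ne_top ν A)
    (ε := μ A - r) (tsub_pos_of_lt hr).ne'
  refine ⟨K, hKA, hK, ?_⟩
  by_contra! hle
  have hKm := hK.measurableSet
  have hdecomp (ρ : Measure X) : ρ A = ρ K + ρ (A \ K) := by
    rw [← measure_inter_add_sdiff A hKm, Set.inter_eq_right.2 hKA]
  rw [hdecomp ν, ENNReal.add_lt_add_iff_left (measure_ne_top ν K)] at hlt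
  have hdiff : μ (A \ K) < μ A - r := (h _).trans_lt hlt
  have : μ A < μ A := calc
    μ A = μ K + μ (A \ K) := hdecomp μ
    _ ≤ r + μ (A \ K) := by gcongr
    _ < r + (μ A - r) := (ENNReal.add_lt_add_iff_left (hr.trans_le le_top).ne).2 hdiff
    _ = μ A := add_tsub_cancel_of_le hr.le
  exact this.false

/-- The set of values of `Λ` on the order interval `[0, f]`. -/
def orderIntervalValues {E : Type*} [AddCommGroup E] [Lattice E] [Module ℝ E]
    (Λ : E →ₗ[ℝ] ℝ) (f : E) : Set ℝ :=
  Λ '' Set.Icc 0 f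

open scoped Pointwise in
theorem orderIntervalValues_add {E : Type*} [AddCommGroup E] [Lattice E] [IsOrderedAddMonoid E]
    [Module ℝ E] (Λ : E →ₗ[ℝ] ℝ) {f g : E} (hf : 0 ≤ f) (hg : 0 ≤ g) :
    orderIntervalValues Λ (f + g) = orderIntervalValues Λ f + orderIntervalValues Λ g := by
  rw [orderIntervalValues, orderIntervalValues, orderIntervalValues, ← Set.image_add]
  congr 1
  ext h
  constructor
  · rintro ⟨h0, hle⟩
    refine Set.mem_add.2 ⟨h ⊓ f, ⟨le_inf h0 hf, inf_le_right⟩, h - h ⊓ f,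
      ⟨sub_nonneg.2 inf_le_left, ?_⟩, by abel⟩
    rw [sub_le_comm]
    exact le_inf (sub_le_self _ hg) (sub_le_iff_le_add.2 hle)
  · rintro ⟨a, ha, b, hb, rfl⟩
    exact ⟨add_nonneg ha.1 hb.1, add_le_add ha.2 hb.2⟩

open scoped Pointwise in
theorem sSup_orderIntervalValues_smul {E : Type*} [AddCommGroup E] [Lattice E] [Module ℝ E]
    [PosSMulMono ℝ E] (Λ : E →ₗ[ℝ] ℝ) {c : ℝ} (hc : 0 ≤ c) (f : E) :
    sSup (orderIntervalValues Λ (c • f)) = c * sSup (orderIntervalValues Λ f) := by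
  rcases hc.eq_or_lt with rfl | hc
  · simp [orderIntervalValues]
  · rw [← smul_eq_mul, ← Real.sSup_smul_of_nonneg hc.le]
    congr 1
    ext t
    constructor
    · rintro ⟨h, ⟨h0, hle⟩, rfl⟩
      refine ⟨Λ (c⁻¹ • h), ⟨c⁻¹ • h, ⟨smul_nonneg (by positivity) h0, ?_⟩, rfl⟩, ?_⟩
      · have := smul_le_smul_of_nonneg_left hle (inv_nonneg.2 hc.le)
        rwa [inv_smul_smul₀ hc.ne'] at this
      · simp [hc.ne']
    · rintro ⟨_, ⟨h, ⟨h0, hle⟩, rfl⟩, rfl⟩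
      exact ⟨c • h, ⟨smul_nonneg hc.le h0, smul_le_smul_of_nonneg_left hle hc.le⟩, by simp⟩

/-- A linear functional on `C_c(X, ℝ)` which is bounded for the uniform norm is a difference of
two bounded positive functionals. -/
theorem CompactlySupportedContinuousMap.exists_eq_sub_of_bounded {X : Type*} [TopologicalSpace X]
    (Λ : C_c(X, ℝ) →ₗ[ℝ] ℝ) (C : ℝ)
    (hΛ : ∀ (f : C_c(X, ℝ)) (M : ℝ), 0 ≤ M → (∀ x, |f x| ≤ M) → |Λ f| ≤ C * M) :
    ∃ P N : C_c(X, ℝ≥0) →ₗ[ℝ≥0] ℝ≥0, (∀ f, Λ f.toReal = P f - N f) ∧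
      ∀ f : C_c(X, ℝ≥0), (∀ x, f x ≤ 1) → (P f : ℝ) ≤ C ∧ (N f : ℝ) ≤ 2 * C := by
  set p : C_c(X, ℝ≥0) → ℝ := fun f => sSup (orderIntervalValues Λ f.toReal) with hp
  have hnn (f : C_c(X, ℝ≥0)) : (0 : C_c(X, ℝ)) ≤ f.toReal := fun x => by simp
  have hub (f : C_c(X, ℝ≥0)) (M : ℝ) (hM : 0 ≤ M) (hfM : ∀ x, (f x : ℝ) ≤ M) :
      ∀ t ∈ orderIntervalValues Λ f.toReal, t ≤ C * M := by
    rintro _ ⟨g, ⟨hg0, hgf⟩, rfl⟩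
    refine (le_abs_self _).trans (hΛ g M hM fun x => ?_)
    rw [abs_of_nonneg (hg0 x)]
    exact (hgf x).trans (by simpa using hfM x)
  have hbdd (f : C_c(X, ℝ≥0)) : BddAbove (orderIntervalValues Λ f.toReal) := by
    obtain ⟨M, hM⟩ := f.toReal.hasCompactSupport.exists_bound_of_continuous f.toReal.continuous
    refine ⟨_, hub f |M| (abs_nonneg M) fun x => ?_⟩
    simpa using (le_abs_self (f.toReal x)).trans ((hM x).trans (le_abs_self M))
  have : PosSMulMono ℝ C_c(X, ℝ) := ⟨fun c hc f g hfg x => by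
    simpa using mul_le_mul_of_nonneg_left (hfg x) hc⟩
  have hzero (f : C_c(X, ℝ≥0)) : (0 : ℝ) ∈ orderIntervalValues Λ f.toReal :=
    ⟨0, ⟨le_rfl, hnn f⟩, map_zero Λ⟩
  have hp0 (f : C_c(X, ℝ≥0)) : 0 ≤ p f := le_csSup (hbdd f) (hzero f)
  have hpΛ (f : C_c(X, ℝ≥0)) : Λ f.toReal ≤ p f :=
    le_csSup (hbdd f) ⟨f.toReal, ⟨hnn f, le_rfl⟩, rfl⟩
  have hadd (f g : C_c(X, ℝ≥0)) : p (f + g) = p f + p g := by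
    have : (f + g).toReal = f.toReal + g.toReal := map_add toRealLinearMap f g
    simp only [hp, this]
    rw [orderIntervalValues_add Λ (hnn f) (hnn g),
      csSup_add ⟨0, hzero f⟩ (hbdd f) ⟨0, hzero g⟩ (hbdd g)]
  have htr (c : ℝ≥0) (f : C_c(X, ℝ≥0)) : (c • f).toReal = (c : ℝ) • f.toReal :=
    map_smul toRealLinearMap c f
  have hsmul (c : ℝ≥0) (f : C_c(X, ℝ≥0)) : p (c • f) = c * p f := by
    simp only [hp, htr]
    exact sSup_orderIntervalValues_smul Λ c.2 f.toReal
  refine ⟨⟨⟨fun f => ⟨p f, hp0 f⟩, fun f g => NNReal.eq (hadd f g)⟩,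
      fun c f => NNReal.eq (hsmul c f)⟩,
    ⟨⟨fun f => ⟨p f - Λ f.toReal, sub_nonneg.2 (hpΛ f)⟩, fun f g => NNReal.eq ?_⟩,
      fun c f => NNReal.eq ?_⟩, fun f => ?_, fun f hf => ⟨?_, ?_⟩⟩
  · have : (f + g).toReal = f.toReal + g.toReal := map_add toRealLinearMap f g
    change p (f + g) - Λ (f + g).toReal = (p f - Λ f.toReal) + (p g - Λ g.toReal)
    rw [hadd, this, map_add]
    ring
  · change p (c • f) - Λ (c • f).toReal = c * (p f - Λ f.toReal)
    rw [hsmul, htr, map_smul, smul_eq_mul]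
    ring
  · exact (sub_sub_cancel (p f) (Λ f.toReal)).symm
  · have := csSup_le ⟨0, hzero f⟩ (hub f 1 zero_le_one fun x => by exact_mod_cast hf x)
    rwa [mul_one] at this
  · have h1 := csSup_le ⟨0, hzero f⟩ (hub f 1 zero_le_one fun x => by exact_mod_cast hf x)
    have h2 := hΛ f.toReal 1 zero_le_one fun x => by simpa using hf x
    have h3 := neg_abs_le (Λ f.toReal)
    change p f - Λ f.toReal ≤ 2 * C
    change p f ≤ _ at h1
    linarith

theorem NNRealRMK.isFiniteMeasure_rieszMeasure {X : Type*} [TopologicalSpace X] [T2Space X]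
    [LocallyCompactSpace X] [MeasurableSpace X] [BorelSpace X]
    (P : C_c(X, ℝ≥0) →ₗ[ℝ≥0] ℝ≥0) (C : ℝ)
    (hP : ∀ f : C_c(X, ℝ≥0), (∀ x, f x ≤ 1) → (P f : ℝ) ≤ C) :
    IsFiniteMeasure (rieszMeasure P) := by
  refine ⟨?_⟩
  rw [isOpen_univ.measure_eq_iSup_isCompact]
  refine lt_of_le_of_lt (iSup₂_le fun K _ => iSup_le fun hK => ?_)
    (ENNReal.ofReal_lt_top (r := C))
  obtain ⟨f, hf1, -, hfc, hf⟩ := exists_continuous_one_zero_of_isCompact hK isClosed_empty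
    (Set.disjoint_empty K)
  let g : C_c(X, ℝ≥0) := (⟨f, hfc⟩ : C_c(X, ℝ)).nnrealPart
  have hg (x) : g x = (f x).toNNReal := by simp [g]
  calc rieszMeasure P K = ∫⁻ x, K.indicator 1 x ∂(rieszMeasure P) := by
        rw [lintegral_indicator_one hK.measurableSet]
    _ ≤ ∫⁻ x, g x ∂(rieszMeasure P) := by
        refine lintegral_mono fun x => ?_
        by_cases hx : x ∈ K
        · simp [hx, hg, hf1 hx]
        · simp [hx]
    _ = P g := lintegral_rieszMeasure P g
    _ ≤ ENNReal.ofReal C := by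
        rw [← ENNReal.ofReal_coe_nnreal]
        refine ENNReal.ofReal_le_ofReal (hP g fun x => ?_)
        rw [hg, Real.toNNReal_le_one]
        exact (hf x).2

/-- Compactly supported functions are uniformly dense among functions vanishing at infinity. -/
theorem ZeroAtInftyContinuousMap.exists_compactlySupported_approx {X : Type*} [TopologicalSpace X]
    [T2Space X] (g : C₀(X, ℝ)) {ε : ℝ} (hε : 0 < ε) :
    ∃ h : C_c(X, ℝ), ∀ x, |h x - g x| ≤ ε := by
  have hev : ∀ᶠ x in cocompact X, |g x| < ε := by
    simpa using (zero_at_infty g).abs.eventually_lt_const (by simpa using hε)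
  obtain ⟨K, hK, hKg⟩ := mem_cocompact.1 hev
  refine ⟨⟨⟨fun x => g x - max (-ε) (min (g x) ε), by fun_prop⟩,
    HasCompactSupport.intro hK fun x hx => ?_⟩, fun x => ?_⟩
  · have hlt : |g x| < ε := hKg hx
    obtain ⟨h1, h2⟩ := abs_lt.1 hlt
    simp [min_eq_left h2.le, max_eq_right h1.le]
  · have : |max (-ε) (min (g x) ε)| ≤ ε :=
      abs_le.2 ⟨le_max_left _ _, max_le (by linarith) (min_le_right _ _)⟩
    simpa using this

/-- A continuous function vanishing at infinity is integrable for every finite measure. -/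
theorem ZeroAtInftyContinuousMap.integrable {X : Type*} [TopologicalSpace X]
    [MeasurableSpace X] [OpensMeasurableSpace X] (g : C₀(X, ℝ)) (μ : Measure X)
    [IsFiniteMeasure μ] : Integrable g μ :=
  g.toBCF.integrable μ

/-- If two functions are within `ε`, so are their integrals, up to the mass of the measure. -/
theorem abs_integral_sub_integral_le {X : Type*} [MeasurableSpace X] (μ : Measure X)
    [IsFiniteMeasure μ] {f g : X → ℝ} (hf : Integrable f μ) (hg : Integrable g μ) {ε : ℝ}
    (h : ∀ x, |f x - g x| ≤ ε) : |∫ x, f x ∂μ - ∫ x, g x ∂μ| ≤ ε * μ.real Set.univ := by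
  rw [← integral_sub hf hg, ← Real.norm_eq_abs]
  exact norm_integral_le_of_norm_le_const (Eventually.of_forall h)

/-- **Riesz representation**: a continuous linear functional on `C₀(X, ℝ)` is integration against
a difference of two finite regular measures. -/
theorem ZeroAtInftyContinuousMap.exists_measure_sub_eq {X : Type*} [TopologicalSpace X] [T2Space X]
    [LocallyCompactSpace X] [MeasurableSpace X] [BorelSpace X] (Λ : C₀(X, ℝ) →L[ℝ] ℝ) :
    ∃ μ ν : Measure X, IsFiniteMeasure μ ∧ IsFiniteMeasure ν ∧ μ.Regular ∧ ν.Regular ∧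
      ∀ g : C₀(X, ℝ), ∫ x, g x ∂μ - ∫ x, g x ∂ν = Λ g := by
  let ι : C_c(X, ℝ) →ₗ[ℝ] C₀(X, ℝ) :=
    { toFun := fun f => ⟨f.toContinuousMap, zero_at_infty f⟩
      map_add' := fun _ _ => rfl
      map_smul' := fun _ _ => rfl }
  have hnorm (f : C₀(X, ℝ)) (M : ℝ) (hM : 0 ≤ M) (hf : ∀ x, |f x| ≤ M) : ‖f‖ ≤ M :=
    (BoundedContinuousFunction.norm_le (f := f.toBCF) hM).2 hf
  have hΛ (f : C₀(X, ℝ)) (M : ℝ) (hM : 0 ≤ M) (hf : ∀ x, |f x| ≤ M) : |Λ f| ≤ ‖Λ‖ * M :=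
    (Λ.le_opNorm f).trans (by gcongr; exact hnorm f M hM hf)
  obtain ⟨P, N, hPN, hbd⟩ := CompactlySupportedContinuousMap.exists_eq_sub_of_bounded
    (Λ.toLinearMap ∘ₗ ι) ‖Λ‖ fun f M hM hf => hΛ (ι f) M hM hf
  have hP := NNRealRMK.isFiniteMeasure_rieszMeasure P _ fun f hf => (hbd f hf).1
  have hN := NNRealRMK.isFiniteMeasure_rieszMeasure N _ fun f hf => (hbd f hf).2
  refine ⟨NNRealRMK.rieszMeasure P, NNRealRMK.rieszMeasure N, hP, hN, inferInstance,
    inferInstance, fun g => ?_⟩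
  set μ := NNRealRMK.rieszMeasure P
  set ν := NNRealRMK.rieszMeasure N
  have hcomp (f : C_c(X, ℝ)) : ∫ x, f x ∂μ - ∫ x, f x ∂ν = Λ (ι f) := by
    have key (Q : C_c(X, ℝ≥0) →ₗ[ℝ≥0] ℝ≥0) : ∫ x, f x ∂(NNRealRMK.rieszMeasure Q) =
        Q f.nnrealPart - Q (-f).nnrealPart := by
      rw [integral_eq_integral_pos_part_sub_integral_neg_part f.integrable,
        ← NNRealRMK.integral_rieszMeasure Q f.nnrealPart,
        ← NNRealRMK.integral_rieszMeasure Q (-f).nnrealPart]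
      rfl
    have h1 := hPN f.nnrealPart
    have h2 := hPN (-f).nnrealPart
    have h3 : Λ (ι f) = Λ (ι f.nnrealPart.toReal) - Λ (ι (-f).nnrealPart.toReal) := by
      rw [← map_sub, ← map_sub, f.nnrealPart_sub_nnrealPart_neg]
    simp only [LinearMap.comp_apply, ContinuousLinearMap.coe_coe] at h1 h2
    rw [key P, key N, h3, h1, h2]
    ring
  refine eq_of_abs_sub_le_all fun ε hε => ?_
  set m := μ.real Set.univ
  set n := ν.real Set.univ
  have hD : 0 < m + n + ‖Λ‖ + 1 := by positivity
  obtain ⟨h, hh⟩ := g.exists_compactlySupported_approx (div_pos hε hD)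
  set δ := ε / (m + n + ‖Λ‖ + 1)
  have e1 := abs_integral_sub_integral_le μ (h.integrable (μ := μ)) (g.integrable μ) hh
  have e2 := abs_integral_sub_integral_le ν (h.integrable (μ := ν)) (g.integrable ν) hh
  have e3 := hΛ (ι h - g) δ (by positivity) hh
  rw [map_sub, ← hcomp] at e3
  have hδ : δ * (m + n + ‖Λ‖ + 1) = ε := div_mul_cancel₀ _ hD.ne'
  have hδ0 : 0 < δ := div_pos hε hD
  rw [abs_le] at *
  constructor <;> nlinarith

/-- A weakly continuous bounded map from `X` to a Hilbert space is almost everywhere strongly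
measurable for every finite inner regular measure. -/
theorem aestronglyMeasurable_of_continuous_inner {X H : Type*} [TopologicalSpace X]
    [MeasurableSpace X] [BorelSpace X] [NormedAddCommGroup H] [InnerProductSpace ℝ H]
    [CompleteSpace H] (Φ : X → H) (B : ℝ) (hB : ∀ x, ‖Φ x‖ ≤ B)
    (hΦ : ∀ f : H, Continuous fun x => ⟪f, Φ x⟫) (μ : Measure X) [IsFiniteMeasure μ]
    [μ.InnerRegular] : AEStronglyMeasurable Φ μ := by
  obtain ⟨w, b, -⟩ := exists_hilbertBasis ℝ H
  have hint (i : w) : Integrable (fun x => ⟪b i, Φ x⟫ ^ 2) μ := by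
    refine Integrable.of_bound ((hΦ (b i)).pow 2).aestronglyMeasurable (B ^ 2)
      (Eventually.of_forall fun x => ?_)
    rw [norm_pow]
    gcongr
    refine (norm_inner_le_norm _ _).trans ?_
    rw [b.orthonormal.1 i, one_mul]
    exact hB x
  have hsum : Summable fun i : w => ∫ x, ⟪b i, Φ x⟫ ^ 2 ∂μ := by
    refine summable_of_sum_le (c := B ^ 2 * μ.real Set.univ)
      (fun i => integral_nonneg fun x => sq_nonneg _) fun s => ?_
    rw [← integral_finsetSum s fun i _ => hint i]
    refine (Real.le_norm_self _).trans
      (norm_integral_le_of_norm_le_const (Eventually.of_forall fun x => ?_))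
    rw [Real.norm_of_nonneg (Finset.sum_nonneg fun i _ => sq_nonneg _)]
    calc ∑ i ∈ s, ⟪b i, Φ x⟫ ^ 2 = ∑ i ∈ s, ‖⟪b i, Φ x⟫‖ ^ 2 := by simp
      _ ≤ ‖Φ x‖ ^ 2 := b.orthonormal.sum_inner_products_le (Φ x)
      _ ≤ B ^ 2 := by gcongr; exact hB x
  set J : Set w := Function.support fun i : w => ∫ x, ⟪b i, Φ x⟫ ^ 2 ∂μ
  have : Countable J := hsum.countable_support.to_subtype
  have hvanish (i : w) (hi : i ∉ J) (x : X) (hx : x ∈ μ.support) : ⟪b i, Φ x⟫ = 0 := by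
    have h0 : ∫ x, ⟪b i, Φ x⟫ ^ 2 ∂μ = 0 := Function.notMem_support.1 hi
    rw [integral_eq_zero_iff_of_nonneg (fun x => sq_nonneg _) (hint i)] at h0
    have hcl : IsClosed {x | ⟪b i, Φ x⟫ = 0} := isClosed_eq (hΦ _) continuous_const
    refine Measure.support_subset_of_isClosed hcl ?_ hx
    filter_upwards [h0] with y hy
    simpa using hy
  refine aestronglyMeasurable_of_tendsto_ae (atTop : Filter (Finset J))
    (f := fun s x => ∑ i ∈ s, ⟪b i, Φ x⟫ • b i) (fun s => ?_) ?_
  · exact Finset.aestronglyMeasurable_fun_sum s fun i _ =>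
      (hΦ (b i)).aestronglyMeasurable.smul aestronglyMeasurable_const
  · filter_upwards [Measure.support_mem_ae_of_innerRegular (μ := μ)] with x hx
    have h := b.hasSum_repr (Φ x)
    simp only [b.repr_apply_apply] at h
    exact (hasSum_subtype_iff_of_support_subset (s := J) fun i hi => by
      by_contra hiJ
      exact hi (by simp [hvanish i hiJ x hx])).2 h

/-- If the functions `⟪Φ y, Φ ·⟫` vanish at infinity, `Φ` is bounded and has dense span, then all
functions `⟪f, Φ ·⟫` vanish at infinity. -/
theorem exists_zeroAtInfty_eq_inner {X H : Type*} [TopologicalSpace X] [NormedAddCommGroup H]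
    [InnerProductSpace ℝ H] (Φ : X → H) (B : ℝ) (hB : ∀ x, ‖Φ x‖ ≤ B)
    (hΦ : ∀ y, ∃ g : C₀(X, ℝ), ∀ x, g x = ⟪Φ y, Φ x⟫)
    (hdense : Dense (Submodule.span ℝ (Set.range Φ) : Set H)) (f : H) :
    ∃ g : C₀(X, ℝ), ∀ x, g x = ⟪f, Φ x⟫ := by
  have hspan (h : H) (hh : h ∈ Submodule.span ℝ (Set.range Φ)) :
      ∃ g : C₀(X, ℝ), ∀ x, g x = ⟪h, Φ x⟫ := by
    induction hh using Submodule.span_induction with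
    | mem h hh => obtain ⟨y, rfl⟩ := hh; exact hΦ y
    | zero => exact ⟨0, fun x => by simp⟩
    | add h₁ h₂ _ _ ih₁ ih₂ =>
      obtain ⟨g₁, hg₁⟩ := ih₁
      obtain ⟨g₂, hg₂⟩ := ih₂
      exact ⟨g₁ + g₂, fun x => by simp [hg₁, hg₂, inner_add_left]⟩
    | smul c h _ ih =>
      obtain ⟨g, hg⟩ := ih
      exact ⟨c • g, fun x => by simp [hg, real_inner_smul_left]⟩
  have happrox (ε : ℝ) (hε : 0 < ε) : ∃ g : C₀(X, ℝ), ∀ x, |⟪f, Φ x⟫ - g x| < ε := by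
    have hD : 0 < |B| + 1 := by positivity
    obtain ⟨h, hh, hd⟩ := Metric.dense_iff.1 hdense f (ε / (|B| + 1)) (by positivity)
    obtain ⟨g, hg⟩ := hspan h hd
    refine ⟨g, fun x => ?_⟩
    rw [hg, ← inner_sub_left]
    rw [Metric.mem_ball, dist_comm, dist_eq_norm, lt_div_iff₀ hD] at hh
    refine ((abs_real_inner_le_norm _ _).trans ?_).trans_lt hh
    gcongr
    linarith [hB x, le_abs_self B]
  refine ⟨⟨⟨fun x => ⟪f, Φ x⟫, ?_⟩, ?_⟩, fun x => rfl⟩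
  · refine continuous_of_uniform_approx_of_continuous fun u hu => ?_
    obtain ⟨ε, hε, hεu⟩ := Metric.mem_uniformity_dist.1 hu
    obtain ⟨g, hg⟩ := happrox ε hε
    exact ⟨g, map_continuous g, fun x => hεu (hg x)⟩
  · refine Metric.tendsto_nhds.2 fun ε hε => ?_
    obtain ⟨g, hg⟩ := happrox (ε / 2) (by positivity)
    filter_upwards [Metric.tendsto_nhds.1 (zero_at_infty g) (ε / 2) (by positivity)] with x hx
    have := hg x
    simp only [Real.dist_eq, sub_zero] at hx ⊢
    calc |⟪f, Φ x⟫| = |(⟪f, Φ x⟫ - g x) + g x| := by ring_nf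
      _ ≤ |⟪f, Φ x⟫ - g x| + |g x| := abs_add_le _ _
      _ < ε := by linarith

/-- Integrals against a difference of finite measures depend only on the signed measure. -/
theorem integral_sub_integral_eq_of_toSignedMeasure_sub_eq {X : Type*} [MeasurableSpace X]
    {μ ν μ' ν' : Measure X} [IsFiniteMeasure μ] [IsFiniteMeasure ν] [IsFiniteMeasure μ']
    [IsFiniteMeasure ν']
    (h : μ.toSignedMeasure - ν.toSignedMeasure = μ'.toSignedMeasure - ν'.toSignedMeasure)
    {f : X → ℝ} (hμ : Integrable f μ) (hν : Integrable f ν) (hμ' : Integrable f μ')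
    (hν' : Integrable f ν') :
    ∫ x, f x ∂μ - ∫ x, f x ∂ν = ∫ x, f x ∂μ' - ∫ x, f x ∂ν' := by
  have hadd : μ + ν' = μ' + ν := by
    rw [← Measure.toSignedMeasure_eq_toSignedMeasure_iff, Measure.toSignedMeasure_add,
      Measure.toSignedMeasure_add]
    exact sub_eq_sub_iff_add_eq_add.1 h
  have hint := congrArg (fun ρ => ∫ x, f x ∂ρ) hadd
  simp only [integral_add_measure hμ hν', integral_add_measure hμ' hν] at hint
  linarith

/-- A point outside the closure of a subspace is separated from it by a continuous functional
vanishing on the subspace. -/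
theorem Submodule.exists_continuousLinearMap_eq_zero {E : Type*} [NormedAddCommGroup E]
    [NormedSpace ℝ E] (S : Submodule ℝ E) {g : E} (hg : g ∉ closure (S : Set E)) :
    ∃ Λ : E →L[ℝ] ℝ, (∀ f ∈ S, Λ f = 0) ∧ Λ g ≠ 0 := by
  obtain ⟨Λ, u, hS, hu⟩ := geometric_hahn_banach_closed_point S.convex.closure isClosed_closure hg
  have hlt (f : E) (hf : f ∈ S) : Λ f < u := hS f (subset_closure hf)
  have hu0 : 0 < u := by simpa using hlt 0 S.zero_mem
  refine ⟨Λ, fun f hf => ?_, (hu0.trans hu).ne'⟩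
  by_contra hne
  have := hlt ((u / Λ f) • f) (S.smul_mem _ hf)
  rw [map_smul, smul_eq_mul, div_mul_cancel₀ _ hne] at this
  exact this.false

theorem inner_svInt {X H : Type*} [MeasurableSpace X] [NormedAddCommGroup H]
    [InnerProductSpace ℝ H] [CompleteSpace H] (μ : SignedMeasure X) {Φ : X → H}
    (hΦ : Integrable Φ μ.totalVariation) (f : H) :
    ⟪f, svInt μ Φ⟫ = ∫ x, ⟪f, Φ x⟫ ∂μ.toJordanDecomposition.posPart -
      ∫ x, ⟪f, Φ x⟫ ∂μ.toJordanDecomposition.negPart := by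
  rw [SignedMeasure.totalVariation, integrable_add_measure] at hΦ
  rw [svInt, inner_sub_right, integral_inner hΦ.1, integral_inner hΦ.2]

/-- Two finite regular measures whose integrals agree on a uniformly dense family of functions
of `C₀(X, ℝ)` are equal. -/
theorem MeasureTheory.Measure.ext_of_integral_eq_of_dense {X : Type*} [TopologicalSpace X]
    [T2Space X] [LocallyCompactSpace X] [MeasurableSpace X] [BorelSpace X] {μ ν : Measure X}
    [IsFiniteMeasure μ] [IsFiniteMeasure ν] [μ.Regular] [ν.Regular] (S : Set C₀(X, ℝ))
    (hS : ∀ (g : C₀(X, ℝ)) (ε : ℝ), 0 < ε → ∃ f ∈ S, ∀ x, |f x - g x| ≤ ε)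
    (h : ∀ f ∈ S, ∫ x, f x ∂μ = ∫ x, f x ∂ν) : μ = ν := by
  refine Measure.ext_of_integral_eq_on_compactlySupported fun c => ?_
  let g : C₀(X, ℝ) := ⟨c.toContinuousMap, zero_at_infty c⟩
  change ∫ x, g x ∂μ = ∫ x, g x ∂ν
  refine eq_of_abs_sub_le_all fun ε hε => ?_
  set m := μ.real Set.univ
  set n := ν.real Set.univ
  have hD : 0 < m + n + 1 := by positivity
  obtain ⟨f, hfS, hf⟩ := hS g (ε / (m + n + 1)) (by positivity)
  set δ := ε / (m + n + 1)
  have e1 := abs_integral_sub_integral_le μ (f.integrable μ) (g.integrable μ) hf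
  have e2 := abs_integral_sub_integral_le ν (f.integrable ν) (g.integrable ν) hf
  rw [h f hfS] at e1
  have hδ : δ * (m + n + 1) = ε := div_mul_cancel₀ _ hD.ne'
  have hδ0 : 0 < δ := div_pos hε hD
  rw [abs_le] at *
  constructor <;> nlinarith

/-- Let `X` be a locally compact Hausdorff space and `k` a bounded
symmetric positive definite kernel on `X` with `k(·,x) ∈ C₀(X)` for all `x`, with RKHS
`H`.  Then `k` is c₀-universal (its RKHS is uniformly dense in `C₀(X)`) iff the embedding
`μ ↦ ∫ k(·,x) dμ(x)` of the finite signed Radon measures into `H` is injective. -/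
theorem stmt2
    {X : Type*} [TopologicalSpace X] [T2Space X] [LocallyCompactSpace X]
    [MeasurableSpace X] [BorelSpace X]
    (k : X → X → ℝ)
    (hkbdd : ∃ C : ℝ, ∀ x y : X, |k x y| ≤ C)
    (hkC0 : ∀ x : X, Continuous (fun y => k y x) ∧
      Tendsto (fun y => k y x) (cocompact X) (𝓝 0))
    {H : Type*} [NormedAddCommGroup H] [InnerProductSpace ℝ H] [CompleteSpace H]
    (T : H →ₗ[ℝ] (X → ℝ)) (hT : Function.Injective T)
    (Φ : X → H)
    (hk : ∀ x y : X, k x y = ⟪Φ x, Φ y⟫)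
    (hrepro : ∀ (f : H) (x : X), T f x = ⟪f, Φ x⟫) :
    (∀ (g : C₀(X, ℝ)) (ε : ℝ), 0 < ε → ∃ f : H, ∀ x : X, |T f x - g x| ≤ ε) ↔
      ∀ μ : MeasureTheory.SignedMeasure X, μ.totalVariation.InnerRegular →
        svInt μ Φ = 0 → μ = 0 := by
  obtain ⟨C, hC⟩ := hkbdd
  have hB (x : X) : ‖Φ x‖ ≤ √C := by
    refine Real.le_sqrt_of_sq_le ?_
    rw [← real_inner_self_eq_norm_sq, ← hk]
    exact (le_abs_self _).trans (hC x x)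
  have hdense : Dense (Submodule.span ℝ (Set.range Φ) : Set H) := by
    rw [Submodule.dense_iff_topologicalClosure_eq_top, Submodule.topologicalClosure_eq_top_iff,
      Submodule.eq_bot_iff]
    intro f hf
    refine hT ((funext fun x => ?_).trans (map_zero T).symm)
    rw [hrepro, real_inner_comm]
    exact Submodule.mem_orthogonal _ f |>.1 hf _ (Submodule.subset_span ⟨x, rfl⟩)
  choose R hR using exists_zeroAtInfty_eq_inner Φ √C hB
    (fun y => ⟨⟨⟨fun x => k x y, (hkC0 y).1⟩, (hkC0 y).2⟩, fun x => by
      rw [real_inner_comm, ← hk]; rfl⟩) hdense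
  have hint (ρ : Measure X) [IsFiniteMeasure ρ] [ρ.InnerRegular] : Integrable Φ ρ :=
    Integrable.of_bound (aestronglyMeasurable_of_continuous_inner Φ √C hB
      (fun f => (map_continuous (R f)).congr (hR f)) ρ) √C (Eventually.of_forall hB)
  simp only [hrepro]
  constructor
  · intro hdenseC₀ μ hμ hzero
    have : IsFiniteMeasure μ.totalVariation := by
      unfold SignedMeasure.totalVariation; infer_instance
    set j := μ.toJordanDecomposition with hj
    have := Measure.InnerRegular.of_le (μ := j.posPart) (ν := μ.totalVariation)
      (Measure.le_add_right le_rfl)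
    have := Measure.InnerRegular.of_le (μ := j.negPart) (ν := μ.totalVariation)
      (Measure.le_add_left le_rfl)
    have hparts : j.posPart = j.negPart := by
      refine Measure.ext_of_integral_eq_of_dense (Set.range R) (fun g ε hε => ?_) ?_
      · obtain ⟨f, hf⟩ := hdenseC₀ g ε hε
        exact ⟨R f, ⟨f, rfl⟩, fun x => by rw [hR]; exact hf x⟩
      · rintro _ ⟨f, rfl⟩
        have := inner_svInt μ (hint μ.totalVariation) f
        rw [hzero, inner_zero_right] at this
        simp only [hR]
        exact sub_eq_zero.1 this.symm
    ext A hA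
    rw [μ.apply_eq_posPart_real_sub_negPart_real hA, ← hj, hparts, sub_self]
    rfl
  · intro hinj g ε hε
    by_contra! hfar
    let S : Submodule ℝ C₀(X, ℝ) := LinearMap.range
      (⟨⟨R, fun f₁ f₂ => by ext x; simp [hR, inner_add_left]⟩,
        fun c f => by ext x; simp [hR, real_inner_smul_left]⟩ : H →ₗ[ℝ] C₀(X, ℝ))
    have hg : g ∉ closure (S : Set C₀(X, ℝ)) := fun hmem => by
      obtain ⟨_, ⟨f, rfl⟩, hd⟩ := Metric.mem_closure_iff.1 hmem ε hε
      obtain ⟨x, hx⟩ := hfar f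
      rw [dist_comm] at hd
      have := BoundedContinuousFunction.dist_coe_le_dist (f := (R f).toBCF) (g := g.toBCF) x
      refine (hx.trans_le ?_).not_gt hd
      rw [← hR]
      exact this
    obtain ⟨Λ, hΛS, hΛg⟩ := S.exists_continuousLinearMap_eq_zero hg
    obtain ⟨μ, ν, _, _, _, _, hrep⟩ := ZeroAtInftyContinuousMap.exists_measure_sub_eq Λ
    set s : SignedMeasure X := μ.toSignedMeasure - ν.toSignedMeasure with hs
    have hsj : s.toJordanDecomposition.toSignedMeasure = s :=
      s.toSignedMeasure_toJordanDecomposition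
    have hint_eq (f : C₀(X, ℝ)) : ∫ x, f x ∂s.toJordanDecomposition.posPart -
        ∫ x, f x ∂s.toJordanDecomposition.negPart = Λ f := by
      rw [← hrep f]
      exact integral_sub_integral_eq_of_toSignedMeasure_sub_eq hsj (f.integrable _)
        (f.integrable _) (f.integrable _) (f.integrable _)
    have hreg : s.totalVariation.InnerRegular := by
      rw [SignedMeasure.totalVariation, hs, Measure.toJordanDecomposition_toSignedMeasure_sub,
        Measure.jordanDecompositionOfToSignedMeasureSub_posPart,
        Measure.jordanDecompositionOfToSignedMeasureSub_negPart]
      have := Measure.InnerRegular.of_le (Measure.sub_le (μ := μ) (ν := ν))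
      have := Measure.InnerRegular.of_le (Measure.sub_le (μ := ν) (ν := μ))
      infer_instance
    have : IsFiniteMeasure s.totalVariation := by
      unfold SignedMeasure.totalVariation; infer_instance
    have hs0 : s = 0 := by
      refine hinj s hreg (ext_inner_left ℝ fun f => ?_)
      rw [inner_svInt s (hint s.totalVariation) f, inner_zero_right, ← hΛS (R f) ⟨f, rfl⟩,
        ← hint_eq]
      simp only [hR]
    refine hΛg ?_
    rw [← hint_eq g, hs0, SignedMeasure.toJordanDecomposition_zero]
    simp
end

section
/- Let X be a locally compact Hausdorff space and let k be a symmetric positive definite kernel on X that is bounded and continuous on X × X, with RKHS H. Then k is cc-universal if and only if ∫_X ∫_X k(x,y) dμ(x) dμ(y) > 0 for every nonzero μ ∈ M_bc(X). -/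
open MeasureTheory Filter Topology RealInnerProductSpace

open scoped NNReal

/-- A linear functional on the cone of nonnegative continuous functions that is bounded above on
order intervals is dominated by a positive one. -/
theorem exists_nnreal_linearMap_ge {Z : Type*} [TopologicalSpace Z]
    (ℓ : C(Z, ℝ≥0) →ₗ[ℝ≥0] ℝ)
    (hℓ : ∀ f, BddAbove (ℓ '' Set.Iic f)) :
    ∃ p : C(Z, ℝ≥0) →ₗ[ℝ≥0] ℝ≥0, ∀ f, ℓ f ≤ p f := by
  set s : C(Z, ℝ≥0) → ℝ := fun f => sSup (ℓ '' Set.Iic f)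
  have le_s {f g : C(Z, ℝ≥0)} (h : g ≤ f) : ℓ g ≤ s f := le_csSup (hℓ f) ⟨g, h, rfl⟩
  have s_le {f : C(Z, ℝ≥0)} {a : ℝ} (h : ∀ g ≤ f, ℓ g ≤ a) : s f ≤ a :=
    csSup_le ⟨_, f, le_refl f, rfl⟩ (by rintro _ ⟨g, hg, rfl⟩; exact h g hg)
  have s_nonneg (f : C(Z, ℝ≥0)) : 0 ≤ s f := by
    simpa using le_s (f := f) (g := 0) fun x => zero_le
  have s_add (f₁ f₂ : C(Z, ℝ≥0)) : s (f₁ + f₂) = s f₁ + s f₂ := by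
    apply le_antisymm
    · refine s_le fun g hg => ?_
      let g₁ : C(Z, ℝ≥0) := ⟨fun x => min (g x) (f₁ x), by fun_prop⟩
      let g₂ : C(Z, ℝ≥0) := ⟨fun x => g x - min (g x) (f₁ x), by fun_prop⟩
      have hsum : g = g₁ + g₂ := by
        ext1 x
        exact (add_tsub_cancel_of_le (min_le_left (g x) (f₁ x))).symm
      have h₁ : g₁ ≤ f₁ := fun x => min_le_right _ _
      have h₂ : g₂ ≤ f₂ := fun x => by
        have hx : g x ≤ f₁ x + f₂ x := hg x
        change g x - min (g x) (f₁ x) ≤ f₂ x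
        rw [tsub_le_iff_right]
        rcases min_cases (g x) (f₁ x) with h | h
        · rw [h.1]; exact le_add_of_nonneg_left zero_le
        · rw [h.1, add_comm]; exact hx
      rw [hsum, map_add]
      exact add_le_add (le_s h₁) (le_s h₂)
    · rw [← le_sub_iff_add_le]
      refine s_le fun g₁ h₁ => ?_
      rw [le_sub_comm]
      refine s_le fun g₂ h₂ => ?_
      rw [le_sub_iff_add_le', ← map_add]
      exact le_s (add_le_add h₁ h₂)
  have smul_s_le (c : ℝ≥0) (f : C(Z, ℝ≥0)) : s (c • f) ≤ c * s f := by
    rcases eq_or_ne c 0 with rfl | hc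
    · refine s_le fun g hg => ?_
      have : g = 0 := by
        ext1 x
        have hx : g x ≤ 0 := by simpa using hg x
        simpa using hx
      simp [this]
    · refine s_le fun g hg => ?_
      have hg' : c⁻¹ • g ≤ f := fun x => by
        have hx : g x ≤ c * f x := hg x
        change c⁻¹ * g x ≤ f x
        rw [mul_comm, ← div_eq_mul_inv]
        exact div_le_of_le_mul₀ zero_le zero_le (by rwa [mul_comm])
      have : ℓ g = c * ℓ (c⁻¹ • g) := by
        conv_lhs => rw [← smul_inv_smul₀ hc g, map_smul]
        rfl
      rw [this]
      exact mul_le_mul_of_nonneg_left (le_s hg') c.2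
  have s_smul (c : ℝ≥0) (f : C(Z, ℝ≥0)) : s (c • f) = c * s f := by
    refine le_antisymm (smul_s_le c f) ?_
    rcases eq_or_ne c 0 with rfl | hc
    · simpa using s_nonneg _
    · have h := smul_s_le c⁻¹ (c • f)
      rw [inv_smul_smul₀ hc, NNReal.coe_inv] at h
      have hc' : (0 : ℝ) < c := by positivity
      rwa [← div_eq_inv_mul, le_div_iff₀' hc'] at h
  exact ⟨{ toFun := fun f => ⟨s f, s_nonneg f⟩
           map_add' := fun f g => NNReal.eq (s_add f g)
           map_smul' := fun c f => NNReal.eq (s_smul c f) }, fun f => le_s le_rfl⟩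

/-- **Riesz representation** for positive functionals on a compact space. -/
theorem exists_regular_integral_eq_nnreal {Z : Type*} [TopologicalSpace Z] [T2Space Z]
    [CompactSpace Z] [MeasurableSpace Z] [BorelSpace Z] (p : C(Z, ℝ≥0) →ₗ[ℝ≥0] ℝ≥0) :
    ∃ P : Measure Z, IsFiniteMeasure P ∧ P.Regular ∧ ∀ f, ∫ x, (f x : ℝ) ∂P = p f := by
  let Λ : CompactlySupportedContinuousMap Z ℝ≥0 →ₗ[ℝ≥0] ℝ≥0 :=
    { toFun := fun f => p f.toContinuousMap
      map_add' := fun f g => map_add p f.toContinuousMap g.toContinuousMap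
      map_smul' := fun c f => map_smul p c f.toContinuousMap }
  refine ⟨NNRealRMK.rieszMeasure Λ, ⟨isCompact_univ.measure_lt_top⟩, inferInstance, fun f => ?_⟩
  exact NNRealRMK.integral_rieszMeasure Λ
    (CompactlySupportedContinuousMap.continuousMapEquiv f)

/-- **Riesz representation** for bounded functionals on `C(Z, ℝ)`, `Z` compact Hausdorff. -/
theorem exists_regular_sub_integral_eq {Z : Type*} [TopologicalSpace Z] [T2Space Z]
    [CompactSpace Z] [MeasurableSpace Z] [BorelSpace Z] (L : StrongDual ℝ C(Z, ℝ)) :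
    ∃ P N : Measure Z, IsFiniteMeasure P ∧ IsFiniteMeasure N ∧ P.Regular ∧ N.Regular ∧
      ∀ f : C(Z, ℝ), L f = ∫ x, f x ∂P - ∫ x, f x ∂N := by
  let ι : C(Z, ℝ≥0) → C(Z, ℝ) := fun f => ⟨fun x => (f x : ℝ), by fun_prop⟩
  let ℓ : C(Z, ℝ≥0) →ₗ[ℝ≥0] ℝ :=
    { toFun := fun f => L (ι f)
      map_add' := fun f g => by
        rw [← map_add]; congr 1
      map_smul' := fun c f => by
        have : ι (c • f) = (c : ℝ) • ι f := by ext x; simp [ι]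
        rw [this, map_smul]; rfl }
  have hℓ (f) : BddAbove (ℓ '' Set.Iic f) := by
    refine ⟨‖L‖ * ‖ι f‖, ?_⟩
    rintro _ ⟨g, hg, rfl⟩
    refine (le_abs_self _).trans ((L.le_opNorm (ι g)).trans ?_)
    gcongr
    refine (ContinuousMap.norm_le _ (norm_nonneg _)).2 fun x => ?_
    refine le_trans ?_ ((ι f).norm_coe_le_norm x)
    have hx : g x ≤ f x := hg x
    simpa [ι] using hx
  obtain ⟨p, hp⟩ := exists_nnreal_linearMap_ge ℓ hℓ
  let n : C(Z, ℝ≥0) →ₗ[ℝ≥0] ℝ≥0 :=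
    { toFun := fun f => ⟨p f - ℓ f, sub_nonneg.2 (hp f)⟩
      map_add' := fun f g => NNReal.eq (by
        change (p (f + g) : ℝ) - ℓ (f + g) = (p f - ℓ f) + (p g - ℓ g)
        rw [map_add, map_add, NNReal.coe_add]; ring)
      map_smul' := fun c f => NNReal.eq (by
        change (p (c • f) : ℝ) - ℓ (c • f) = c * (p f - ℓ f)
        rw [map_smul, map_smul, NNReal.smul_def, smul_eq_mul, smul_eq_mul, NNReal.coe_mul]
        ring) }
  obtain ⟨P, hPf, hPr, hP⟩ := exists_regular_integral_eq_nnreal p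
  obtain ⟨N, hNf, hNr, hN⟩ := exists_regular_integral_eq_nnreal n
  refine ⟨P, N, hPf, hNf, hPr, hNr, fun f => ?_⟩
  let fp : C(Z, ℝ≥0) := ⟨fun x => (f x).toNNReal, by fun_prop⟩
  let fn : C(Z, ℝ≥0) := ⟨fun x => (-f x).toNNReal, by fun_prop⟩
  have hf : f = ι fp - ι fn := by
    ext x
    simp only [ι, fp, fn, ContinuousMap.sub_apply, ContinuousMap.coe_mk, Real.coe_toNNReal']
    exact (max_zero_sub_max_neg_zero_eq_self (f x)).symm
  have key (g : C(Z, ℝ≥0)) : L (ι g) = ∫ x, ι g x ∂P - ∫ x, ι g x ∂N := by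
    have h1 : ∫ x, ι g x ∂P = p g := hP g
    have h2 : ∫ x, ι g x ∂N = p g - L (ι g) := hN g
    rw [h1, h2]; ring
  have hint (μ : Measure Z) [IsFiniteMeasure μ] (g : C(Z, ℝ)) : Integrable g μ :=
    g.continuous.integrable_of_hasCompactSupport (HasCompactSupport.of_compactSpace _)
  rw [hf, map_sub, key, key]
  simp only [ContinuousMap.sub_apply]
  rw [integral_sub (hint P _) (hint P _), integral_sub (hint N _) (hint N _)]
  ring

/-- A measure dominated by a finite inner regular measure is inner regular. -/
theorem innerRegular_of_le {X : Type*} [TopologicalSpace X] [T2Space X] [MeasurableSpace X]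
    [BorelSpace X] {μ ν : Measure X} [IsFiniteMeasure ν] [ν.InnerRegular] (h : μ ≤ ν) :
    μ.InnerRegular := by
  refine ⟨fun A hA r hr => ?_⟩
  obtain ⟨K, hKA, hK, hlt⟩ := hA.exists_isCompact_sdiff_lt (μ := ν) (measure_ne_top _ _)
    (tsub_pos_of_lt hr).ne'
  refine ⟨K, hKA, hK, ?_⟩
  by_contra! hle
  have h₁ : μ A ≤ μ K + μ (A \ K) := by
    rw [measure_add_sdiff hK.measurableSet.nullMeasurableSet, Set.union_eq_right.2 hKA]
  have h₂ : μ (A \ K) < μ A - r := (h _).trans_lt hlt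
  have h₃ : μ K + μ (A \ K) < r + (μ A - r) :=
    ENNReal.add_lt_add_of_le_of_lt (hle.trans_lt (hr.trans_le le_top)).ne hle h₂
  rw [add_tsub_cancel_of_le hr.le] at h₃
  exact absurd h₁ h₃.not_ge

section svInt

variable {X : Type*} [MeasurableSpace X]

theorem svInt_toSignedMeasure_sub {P N : Measure X} [IsFiniteMeasure P] [IsFiniteMeasure N]
    {f : X → ℝ} (hP : Integrable f P) (hN : Integrable f N) :
    svInt (P.toSignedMeasure - N.toSignedMeasure) f = ∫ x, f x ∂P - ∫ x, f x ∂N := by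
  have heq : (P - N) + N = (N - P) + P := by
    rw [← Measure.toSignedMeasure_eq_toSignedMeasure_iff, Measure.toSignedMeasure_add,
      Measure.toSignedMeasure_add]
    have := Measure.sub_toSignedMeasure_eq_toSignedMeasure_sub (μ := P) (ν := N)
    rw [sub_eq_sub_iff_add_eq_add] at this
    rw [← this, add_comm]
  have h := congrArg (fun m => ∫ x, f x ∂m) heq
  have hPN : Integrable f (P - N) := hP.mono_measure Measure.sub_le
  have hNP : Integrable f (N - P) := hN.mono_measure Measure.sub_le
  simp only [integral_add_measure hPN hN, integral_add_measure hNP hP] at h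
  rw [svInt, Measure.toJordanDecomposition_toSignedMeasure_sub,
    Measure.jordanDecompositionOfToSignedMeasureSub_posPart,
    Measure.jordanDecompositionOfToSignedMeasureSub_negPart]
  linarith

theorem totalVariation_toSignedMeasure_sub_le {P N : Measure X} [IsFiniteMeasure P]
    [IsFiniteMeasure N] :
    (P.toSignedMeasure - N.toSignedMeasure).totalVariation ≤ P + N := by
  rw [SignedMeasure.totalVariation, Measure.toJordanDecomposition_toSignedMeasure_sub,
    Measure.jordanDecompositionOfToSignedMeasureSub_posPart,
    Measure.jordanDecompositionOfToSignedMeasureSub_negPart]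
  exact add_le_add Measure.sub_le Measure.sub_le

theorem abs_svInt_le (μ : SignedMeasure X) {f : X → ℝ} {C : ℝ}
    (h : ∀ᵐ x ∂μ.totalVariation, |f x| ≤ C) :
    |svInt μ f| ≤ C * (μ.toJordanDecomposition.posPart.real Set.univ +
      μ.toJordanDecomposition.negPart.real Set.univ) := by
  rw [SignedMeasure.totalVariation, ae_add_measure_iff] at h
  rw [svInt, mul_add]
  refine (abs_sub _ _).trans (add_le_add ?_ ?_)
  · exact norm_integral_le_of_norm_le_const (f := f) h.1
  · exact norm_integral_le_of_norm_le_const (f := f) h.2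

theorem svInt_sub (μ : SignedMeasure X) {f g : X → ℝ}
    (hf : Integrable f μ.totalVariation) (hg : Integrable g μ.totalVariation) :
    svInt μ (fun x => f x - g x) = svInt μ f - svInt μ g := by
  rw [SignedMeasure.totalVariation, integrable_add_measure] at hf hg
  rw [svInt, svInt, svInt, integral_sub hf.1 hg.1, integral_sub hf.2 hg.2]
  ring

theorem svInt_add (μ : SignedMeasure X) {f g : X → ℝ}
    (hf : Integrable f μ.totalVariation) (hg : Integrable g μ.totalVariation) :
    svInt μ (fun x => f x + g x) = svInt μ f + svInt μ g := by
  rw [SignedMeasure.totalVariation, integrable_add_measure] at hf hg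
  rw [svInt, svInt, svInt, integral_add hf.1 hg.1, integral_add hf.2 hg.2]
  ring

theorem svInt_const_mul (μ : SignedMeasure X) (c : ℝ) (f : X → ℝ) :
    svInt μ (fun x => c * f x) = c * svInt μ f := by
  rw [svInt, svInt, integral_const_mul, integral_const_mul, mul_sub]

theorem svInt_svInt_eq_norm_sq {H : Type*} [NormedAddCommGroup H] [InnerProductSpace ℝ H]
    {Φ : X → H} {μ : SignedMeasure X} {m : H}
    (hm : ∀ f : H, svInt μ (fun x => ⟪f, Φ x⟫) = ⟪m, f⟫) :
    svInt μ (fun x => svInt μ fun y => ⟪Φ x, Φ y⟫) = ‖m‖ ^ 2 := by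
  simp only [hm, real_inner_self_eq_norm_sq]

end svInt

/-- A finite signed Radon measure that annihilates the continuous compactly supported
functions vanishes. -/
theorem signedMeasure_eq_zero_of_svInt_eq_zero {X : Type*} [TopologicalSpace X] [T2Space X]
    [LocallyCompactSpace X] [MeasurableSpace X] [BorelSpace X] (μ : SignedMeasure X)
    (hμ : μ.totalVariation.InnerRegular)
    (h : ∀ f : CompactlySupportedContinuousMap X ℝ, svInt μ f = 0) : μ = 0 := by
  have hP : μ.toJordanDecomposition.posPart.InnerRegular :=
    innerRegular_of_le (ν := μ.totalVariation) (Measure.le_add_right le_rfl)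
  have hN : μ.toJordanDecomposition.negPart.InnerRegular :=
    innerRegular_of_le (ν := μ.totalVariation) (Measure.le_add_left le_rfl)
  have heq : μ.toJordanDecomposition.posPart = μ.toJordanDecomposition.negPart :=
    Measure.ext_of_integral_eq_on_compactlySupported fun f => sub_eq_zero.1 (h f)
  rw [← μ.toSignedMeasure_toJordanDecomposition, JordanDecomposition.toSignedMeasure]
  simp [heq]

section Kernel

variable {X : Type*} [TopologicalSpace X] {H : Type*} [NormedAddCommGroup H]
  [InnerProductSpace ℝ H]

theorem continuous_of_continuous_inner {Φ : X → H}
    (h : Continuous fun p : X × X => ⟪Φ p.1, Φ p.2⟫) : Continuous Φ := by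
  rw [continuous_iff_continuousAt]
  intro x
  rw [ContinuousAt, tendsto_iff_norm_sub_tendsto_zero]
  have hdiag : Continuous fun y => ⟪Φ y, Φ y⟫ := h.comp (continuous_id.prodMk continuous_id)
  have hx : Continuous fun y => ⟪Φ y, Φ x⟫ := h.comp (continuous_id.prodMk continuous_const)
  have hcont : Continuous fun y => √(⟪Φ y, Φ y⟫ - 2 * ⟪Φ y, Φ x⟫ + ⟪Φ x, Φ x⟫) := by fun_prop
  have heq : (fun y => ‖Φ y - Φ x‖) =
      fun y => √(⟪Φ y, Φ y⟫ - 2 * ⟪Φ y, Φ x⟫ + ⟪Φ x, Φ x⟫) := by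
    funext y
    rw [real_inner_self_eq_norm_sq, real_inner_self_eq_norm_sq, ← norm_sub_sq_real,
      Real.sqrt_sq (norm_nonneg _)]
  rw [heq]
  convert hcont.tendsto x using 2
  rw [real_inner_self_eq_norm_sq]
  ring_nf
  simp

variable [MeasurableSpace X] [BorelSpace X]

theorem integrable_inner_of_bounded {Φ : X → H} (hΦ : Continuous Φ) {B : ℝ}
    (hB : ∀ x, ‖Φ x‖ ≤ B) (ν : Measure X) [IsFiniteMeasure ν] (f : H) :
    Integrable (fun x => ⟪f, Φ x⟫) ν := by
  have hc : Continuous fun x => ⟪f, Φ x⟫ := by fun_prop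
  refine Integrable.of_bound hc.measurable.aestronglyMeasurable (‖f‖ * B) (ae_of_all _ fun x => ?_)
  exact (norm_inner_le_norm _ _).trans (by gcongr; exact hB x)

/-- The kernel mean embedding of a signed measure: the Riesz representative of integration. -/
theorem exists_mean_embedding [CompleteSpace H] {Φ : X → H} (hΦ : Continuous Φ) {B : ℝ}
    (hB : ∀ x, ‖Φ x‖ ≤ B) (μ : SignedMeasure X) :
    ∃ m : H, ∀ f : H, svInt μ (fun x => ⟪f, Φ x⟫) = ⟪m, f⟫ := by
  have hint := integrable_inner_of_bounded hΦ hB μ.totalVariation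
  let A : H →ₗ[ℝ] ℝ :=
    { toFun := fun f => svInt μ (fun x => ⟪f, Φ x⟫)
      map_add' := fun f g => by
        simp only [inner_add_left]
        exact svInt_add μ (hint f) (hint g)
      map_smul' := fun c f => by
        simp only [real_inner_smul_left]
        exact svInt_const_mul μ c _ }
  let L : StrongDual ℝ H := A.mkContinuous (B * (μ.toJordanDecomposition.posPart.real Set.univ +
      μ.toJordanDecomposition.negPart.real Set.univ)) fun f => by
    refine (abs_svInt_le μ (C := ‖f‖ * B) (ae_of_all _ fun x => ?_)).trans_eq (by ring)
    exact (norm_inner_le_norm (𝕜 := ℝ) f (Φ x)).trans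
      (mul_le_mul_of_nonneg_left (hB x) (norm_nonneg f))
  refine ⟨(InnerProductSpace.toDual ℝ H).symm L, fun f => ?_⟩
  rw [InnerProductSpace.toDual_symm_apply]
  rfl

end Kernel

/-- If a subspace of `C(Z, ℝ)`, `Z` compact Hausdorff, is not dense, then two distinct finite Radon
measures agree on it. -/
theorem exists_measures_of_not_dense {Z : Type*} [TopologicalSpace Z] [T2Space Z] [CompactSpace Z]
    [MeasurableSpace Z] [BorelSpace Z] (S : Submodule ℝ C(Z, ℝ)) (g : C(Z, ℝ))
    (hg : g ∉ S.topologicalClosure) :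
    ∃ P N : Measure Z, IsFiniteMeasure P ∧ IsFiniteMeasure N ∧ P.Regular ∧ N.Regular ∧ P ≠ N ∧
      ∀ f ∈ S, ∫ x, f x ∂P = ∫ x, f x ∂N := by
  obtain ⟨L, u, hL, hu⟩ := geometric_hahn_banach_closed_point
    (s := (S.topologicalClosure : Set C(Z, ℝ))) S.topologicalClosure.convex
    S.isClosed_topologicalClosure hg
  obtain ⟨P, N, hP, hN, hPr, hNr, hPN⟩ := exists_regular_sub_integral_eq L
  have h0 : 0 < u := by simpa using hL 0 (zero_mem _)
  refine ⟨P, N, hP, hN, hPr, hNr, ?_, fun f hf => ?_⟩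
  · rintro rfl
    have := hPN g
    rw [sub_self] at this
    linarith
  · rw [← sub_eq_zero, ← hPN]
    by_contra hne
    have h := hL ((u / L f) • f) (S.le_topologicalClosure (S.smul_mem _ hf))
    rw [map_smul, smul_eq_mul, div_mul_cancel₀ _ hne] at h
    exact lt_irrefl _ h


/-- Let `X` be a locally compact Hausdorff space and `k` a bounded
continuous symmetric positive definite kernel on `X` with RKHS `H`.  Then `k` is
cc-universal iff `∫∫ k(x,y) dμ(x) dμ(y) > 0` for every nonzero compactly supported finite
signed Radon measure `μ` on `X`. -/
theorem stmt4
    {X : Type*} [TopologicalSpace X] [T2Space X] [LocallyCompactSpace X]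
    [MeasurableSpace X] [BorelSpace X]
    (k : X → X → ℝ) (hkcont : Continuous fun p : X × X => k p.1 p.2)
    (hkbdd : ∃ C : ℝ, ∀ x y : X, |k x y| ≤ C)
    {H : Type*} [NormedAddCommGroup H] [InnerProductSpace ℝ H] [CompleteSpace H]
    (T : H →ₗ[ℝ] (X → ℝ)) (hT : Function.Injective T)
    (Φ : X → H)
    (hk : ∀ x y : X, k x y = ⟪Φ x, Φ y⟫)
    (hrepro : ∀ (f : H) (x : X), T f x = ⟪f, Φ x⟫) :
    (∀ (Z : Set X), IsCompact Z → ∀ (g : C(Z, ℝ)) (ε : ℝ), 0 < ε →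
        ∃ f : H, ∀ x : Z, |T f (x : X) - g x| ≤ ε) ↔
      ∀ μ : MeasureTheory.SignedMeasure X, μ.totalVariation.InnerRegular →
        (∃ K : Set X, IsCompact K ∧ μ.totalVariation Kᶜ = 0) → μ ≠ 0 →
        0 < svInt μ (fun x => svInt μ (fun y => k x y)) := by
  obtain ⟨C, hC⟩ := hkbdd
  simp only [hk] at hkcont hC
  have hΦ : Continuous Φ := continuous_of_continuous_inner hkcont
  have hB (x : X) : ‖Φ x‖ ≤ √C := by
    refine Real.le_sqrt_of_sq_le ?_
    rw [← real_inner_self_eq_norm_sq]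
    exact (le_abs_self _).trans (hC x x)
  simp only [hk, hrepro]
  constructor
  · rintro huniv μ hreg ⟨K, hK, hμK⟩ hμ0
    obtain ⟨m, hm⟩ := exists_mean_embedding hΦ hB μ
    rw [svInt_svInt_eq_norm_sq hm]
    refine pow_pos (norm_pos_iff.2 ?_) 2
    rintro rfl
    refine hμ0 (signedMeasure_eq_zero_of_svInt_eq_zero μ hreg fun g => ?_)
    set M := μ.toJordanDecomposition.posPart.real Set.univ +
      μ.toJordanDecomposition.negPart.real Set.univ
    have hM0 : 0 ≤ M := by positivity
    have hgint : Integrable g μ.totalVariation := g.integrable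
    have hle (ε : ℝ) (hε : 0 < ε) : |svInt μ g| ≤ ε * M := by
      obtain ⟨f, hf⟩ := huniv K hK ⟨fun x => g x, by fun_prop⟩ ε hε
      have hdiff := svInt_sub μ (integrable_inner_of_bounded hΦ hB _ f) hgint
      rw [hm, inner_zero_left, zero_sub] at hdiff
      rw [← abs_neg, ← hdiff]
      refine abs_svInt_le μ ?_
      filter_upwards [measure_eq_zero_iff_ae_notMem.1 hμK] with x hx
      exact hf ⟨x, not_not.1 hx⟩
    by_contra hne
    have hpos : 0 < |svInt μ g| := abs_pos.2 hne
    have h := hle (|svInt μ g| / (2 * (M + 1))) (by positivity)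
    rw [div_mul_eq_mul_div, le_div_iff₀ (by positivity)] at h
    nlinarith
  · intro hpos Z hZ g ε hε
    have : CompactSpace Z := isCompact_iff_compactSpace.1 hZ
    let R : H →ₗ[ℝ] C(Z, ℝ) :=
      { toFun := fun f => ⟨fun x => ⟪f, Φ x⟫, by fun_prop⟩
        map_add' := fun f f' => by ext x; simp [inner_add_left]
        map_smul' := fun c f => by ext x; simp [real_inner_smul_left] }
    by_cases hg : g ∈ (LinearMap.range R).topologicalClosure
    · obtain ⟨_, ⟨f, rfl⟩, hf⟩ := Metric.mem_closure_iff.1 hg ε hε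
      refine ⟨f, fun x => ?_⟩
      rw [dist_comm] at hf
      exact (ContinuousMap.dist_apply_le_dist (f := R f) (g := g) x).trans hf.le
    obtain ⟨P, N, hP, hN, hPr, hNr, hne, hPN⟩ := exists_measures_of_not_dense _ g hg
    exfalso
    have hemb : MeasurableEmbedding (Subtype.val : Z → X) :=
      MeasurableEmbedding.subtype_coe hZ.measurableSet
    set P' := P.map Subtype.val with hP'
    set N' := N.map Subtype.val with hN'
    have : P'.InnerRegular := Measure.InnerRegular.map_of_continuous continuous_subtype_val
    have : N'.InnerRegular := Measure.InnerRegular.map_of_continuous continuous_subtype_val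
    have hle := totalVariation_toSignedMeasure_sub_le (P := P') (N := N')
    have hlt := hpos (P'.toSignedMeasure - N'.toSignedMeasure) (innerRegular_of_le hle)
      ⟨Z, hZ, ?_⟩ ?_
    · obtain ⟨m, hm⟩ := exists_mean_embedding hΦ hB (P'.toSignedMeasure - N'.toSignedMeasure)
      have hm0 : m = 0 := by
        rw [← inner_self_eq_zero (𝕜 := ℝ), ← hm m, svInt_toSignedMeasure_sub
          (integrable_inner_of_bounded hΦ hB _ m) (integrable_inner_of_bounded hΦ hB _ m),
          hemb.integral_map, hemb.integral_map, sub_eq_zero]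
        exact hPN (R m) ⟨m, rfl⟩
      rw [svInt_svInt_eq_norm_sq hm, hm0] at hlt
      simp at hlt
    · refine le_antisymm ((hle _).trans_eq ?_) zero_le
      simp [hP', hN', hemb.map_apply]
    · rw [sub_ne_zero]
      intro h
      rw [Measure.toSignedMeasure_eq_toSignedMeasure_iff] at h
      refine hne ?_
      rw [← hemb.comap_map P, ← hemb.comap_map N, ← hP', h]
end
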